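/- For a unital ℓ-group (G, u), the following are equivalent: (1) Rad(G) = {0}, i.e. (G, u) is semisimple; (2) G is Archimedean, i.e. for all g, h ∈ G with 0 < g ≤ h there exists m ∈ ℕ with ¬(m • g ≤ h). -/

import Mathlib

/-!
An element `g` whose multiples are all bounded by some `h` lies in every maximal ℓ-ideal `M`: if
`g ∉ M`, then `M` and `g` generate `G`, so `h ≤ k + n • |g|` with `k ∈ M`, and comparing with
`(n + 1) • |g| ≤ h` gives `|g| ≤ k`. Hence a trivial radical excludes infinitesimals.

Conversely, if `m • g ≤ u` fails, put `d = m • g - u`. Since `d⁺ ≠ 0` is disjoint from `d⁻`, the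
ℓ-ideal generated by `d⁻` is proper, so it is contained in a maximal ℓ-ideal `M`. There
`u ≤ m • g + d⁻`, so `g ∈ M` would force `u ∈ M`.
-/

/-- An ℓ-ideal of an ℓ-group `G`: an additive subgroup `I` such that `g ∈ I`
whenever `|g| ≤ |h|` for some `h ∈ I`. -/
def IsLIdeal {G : Type*} [Lattice G] [AddCommGroup G]
    [CovariantClass G G (· + ·) (· ≤ ·)] (I : AddSubgroup G) : Prop :=
  ∀ ⦃g h : G⦄, h ∈ I → |g| ≤ |h| → g ∈ I

/-- The ℓ-ideal generated by a subset `S` of `G`: the smallest ℓ-ideal containing `S`. -/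
def lIdealGen {G : Type*} [Lattice G] [AddCommGroup G]
    [CovariantClass G G (· + ·) (· ≤ ·)] (S : Set G) : AddSubgroup G :=
  sInf {I : AddSubgroup G | IsLIdeal I ∧ S ⊆ ↑I}

/-- A prime ℓ-ideal: a proper ℓ-ideal `p` such that `a ⊓ b = 0` implies `a ∈ p` or `b ∈ p`. -/
def IsPrimeLIdeal {G : Type*} [Lattice G] [AddCommGroup G]
    [CovariantClass G G (· + ·) (· ≤ ·)] (p : AddSubgroup G) : Prop :=
  IsLIdeal p ∧ p ≠ ⊤ ∧ ∀ a b : G, a ⊓ b = 0 → a ∈ p ∨ b ∈ p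

/-- A maximal ℓ-ideal: a proper ℓ-ideal maximal under inclusion among proper ℓ-ideals. -/
def IsMaximalLIdeal {G : Type*} [Lattice G] [AddCommGroup G]
    [CovariantClass G G (· + ·) (· ≤ ·)] (m : AddSubgroup G) : Prop :=
  IsLIdeal m ∧ m ≠ ⊤ ∧ ∀ I : AddSubgroup G, IsLIdeal I → I ≠ ⊤ → m ≤ I → I = m

/-- A (strong order) unit of `G`. -/
def IsStrongUnit {G : Type*} [Lattice G] [AddCommGroup G]
    [CovariantClass G G (· + ·) (· ≤ ·)] (u : G) : Prop :=
  0 ≤ u ∧ ∀ g : G, ∃ n : ℕ, g ≤ n • u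

/-- `G` is strongly semisimple: for every `h ∈ G`, the intersection of all maximal
ℓ-ideals containing `h` equals the principal ℓ-ideal generated by `h`. -/
def IsStronglySemisimple (G : Type*) [Lattice G] [AddCommGroup G]
    [CovariantClass G G (· + ·) (· ≤ ·)] : Prop :=
  ∀ h : G, sInf {m : AddSubgroup G | IsMaximalLIdeal m ∧ h ∈ m} = lIdealGen {h}

theorem inf_nsmul_eq_zero {G : Type*} [Lattice G] [AddGroup G] [AddLeftMono G] [AddRightMono G]
    {a b : G} (hab : a ⊓ b = 0) (n : ℕ) : a ⊓ n • b = 0 := by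
  have ha : 0 ≤ a := hab ▸ inf_le_left
  have hb : 0 ≤ b := hab ▸ inf_le_right
  induction n with
  | zero => rw [zero_nsmul, inf_eq_right.2 ha]
  | succ n ih =>
    have h_le : a ⊓ (n + 1) • b ≤ b :=
      calc a ⊓ (n + 1) • b ≤ (a + b) ⊓ (n • b + b) := by
            rw [succ_nsmul]
            exact inf_le_inf_right _ (le_add_of_nonneg_right hb)
        _ = a ⊓ n • b + b := (inf_add _ _ _).symm
        _ = b := by rw [ih, zero_add]
    exact le_antisymm (hab ▸ le_inf inf_le_left h_le) (le_inf ha (nsmul_nonneg hb _))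

section LIdeal

variable {G : Type*} [Lattice G] [AddCommGroup G] [AddLeftMono G]

namespace IsLIdeal

variable {I : AddSubgroup G}

theorem abs_mem_iff (hI : IsLIdeal I) {x : G} : |x| ∈ I ↔ x ∈ I :=
  ⟨fun hx ↦ hI hx (abs_abs x).ge, fun hx ↦ hI hx (abs_abs x).le⟩

theorem mem_of_abs_le (hI : IsLIdeal I) {x y : G} (hy : y ∈ I) (hxy : |x| ≤ y) : x ∈ I :=
  hI hy (hxy.trans (le_abs_self y))

theorem sSup_of_directedOn {S : Set (AddSubgroup G)} (hne : S.Nonempty)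
    (hdir : DirectedOn (· ≤ ·) S) (hS : ∀ I ∈ S, IsLIdeal I) : IsLIdeal (sSup S) := by
  intro x y hy hxy
  rw [AddSubgroup.mem_sSup_of_directedOn hne hdir] at hy ⊢
  obtain ⟨I, hIS, hyI⟩ := hy
  exact ⟨I, hIS, hS I hIS hyI hxy⟩

end IsLIdeal

section Generation

variable {S : Set G}

theorem isLIdeal_lIdealGen : IsLIdeal (lIdealGen S) := by
  intro x y hy hxy
  rw [lIdealGen, AddSubgroup.mem_sInf] at hy ⊢
  exact fun I hI ↦ hI.1 (hy I hI) hxy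

theorem subset_lIdealGen : S ⊆ lIdealGen S := fun _ hx ↦
  AddSubgroup.mem_sInf.2 fun _ hI ↦ hI.2 hx

theorem mem_lIdealGen_iff {x : G} :
    x ∈ lIdealGen S ↔ ∃ y ∈ AddSubmonoid.closure (abs '' S), |x| ≤ y := by
  constructor
  · let J : AddSubgroup G :=
      { carrier := {x | ∃ y ∈ AddSubmonoid.closure (abs '' S), |x| ≤ y}
        zero_mem' := ⟨0, zero_mem _, abs_zero.le⟩
        add_mem' := by
          rintro a b ⟨y, hy, hay⟩ ⟨z, hz, hbz⟩
          exact ⟨y + z, add_mem hy hz, (abs_add_le a b).trans (add_le_add hay hbz)⟩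
        neg_mem' := by
          rintro a ⟨y, hy, hay⟩
          exact ⟨y, hy, (abs_neg a).trans_le hay⟩ }
    have hJ : IsLIdeal J := fun _ _ ⟨y, hy, hby⟩ hab ↦ ⟨y, hy, hab.trans hby⟩
    have hSJ : S ⊆ J := fun s hs ↦
      ⟨|s|, AddSubmonoid.subset_closure (Set.mem_image_of_mem abs hs), le_rfl⟩
    exact fun hx ↦ AddSubgroup.mem_sInf.1 hx J ⟨hJ, hSJ⟩
  · rintro ⟨y, hy, hxy⟩
    have h_closure : AddSubmonoid.closure (abs '' S) ≤ (lIdealGen S).toAddSubmonoid := by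
      rw [AddSubmonoid.closure_le]
      rintro _ ⟨s, hs, rfl⟩
      exact isLIdeal_lIdealGen.abs_mem_iff.2 (subset_lIdealGen hs)
    exact isLIdeal_lIdealGen.mem_of_abs_le (h_closure hy) hxy

theorem mem_lIdealGen_singleton {x g : G} : x ∈ lIdealGen {g} ↔ ∃ n : ℕ, |x| ≤ n • |g| := by
  simp only [mem_lIdealGen_iff, Set.image_singleton, AddSubmonoid.mem_closure_singleton,
    exists_exists_eq_and]

theorem IsLIdeal.mem_lIdealGen_insert {I : AddSubgroup G} (hI : IsLIdeal I) {x g : G} :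
    x ∈ lIdealGen (insert g (I : Set G)) ↔ ∃ k ∈ I, ∃ n : ℕ, |x| ≤ k + n • |g| := by
  have h_closure : AddSubmonoid.closure (abs '' (I : Set G)) ≤ I.toAddSubmonoid := by
    rw [AddSubmonoid.closure_le]
    rintro _ ⟨k, hk, rfl⟩
    exact hI.abs_mem_iff.2 hk
  rw [mem_lIdealGen_iff, Set.image_insert_eq, Set.insert_eq, AddSubmonoid.closure_union]
  constructor
  · rintro ⟨y, hy, hxy⟩
    obtain ⟨_, h_multiple, k, hk, rfl⟩ := AddSubmonoid.mem_sup.1 hy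
    obtain ⟨n, rfl⟩ := AddSubmonoid.mem_closure_singleton.1 h_multiple
    exact ⟨k, h_closure hk, n, hxy.trans_eq (add_comm _ _)⟩
  · rintro ⟨k, hk, n, hxk⟩
    have hk_mem : |k| ∈ AddSubmonoid.closure (abs '' (I : Set G)) :=
      AddSubmonoid.subset_closure (Set.mem_image_of_mem abs hk)
    have hg_mem : n • |g| ∈ AddSubmonoid.closure {|g|} :=
      AddSubmonoid.mem_closure_singleton.2 ⟨n, rfl⟩
    exact ⟨n • |g| + |k|, AddSubmonoid.add_mem_sup hg_mem hk_mem,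
      (hxk.trans (add_le_add_left (le_abs_self k) _)).trans_eq (add_comm _ _)⟩

theorem eq_zero_of_mem_lIdealGen_of_inf_eq_zero {a b : G} (hab : a ⊓ b = 0)
    (ha : a ∈ lIdealGen {b}) : a = 0 := by
  have ha_nonneg : 0 ≤ a := hab ▸ inf_le_left
  have hb_nonneg : 0 ≤ b := hab ▸ inf_le_right
  obtain ⟨n, hn⟩ := mem_lIdealGen_singleton.1 ha
  rw [abs_of_nonneg ha_nonneg, abs_of_nonneg hb_nonneg] at hn
  rw [← inf_eq_left.2 hn, inf_nsmul_eq_zero hab]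

end Generation

namespace IsMaximalLIdeal

variable {M : AddSubgroup G}

theorem exists_abs_le_add_nsmul (hM : IsMaximalLIdeal M) {g : G} (hg : g ∉ M) (h : G) :
    ∃ k ∈ M, ∃ n : ℕ, |h| ≤ k + n • |g| := by
  have hM_le : (M : Set G) ⊆ lIdealGen (insert g (M : Set G)) :=
    (Set.subset_insert g _).trans subset_lIdealGen
  have hg_mem : g ∈ lIdealGen (insert g (M : Set G)) := subset_lIdealGen (Set.mem_insert g _)
  have h_top : lIdealGen (insert g (M : Set G)) = ⊤ := by
    by_contra h_ne
    exact hg (hM.2.2 _ isLIdeal_lIdealGen h_ne hM_le ▸ hg_mem)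
  exact hM.1.mem_lIdealGen_insert.1 (h_top ▸ AddSubgroup.mem_top h)

theorem mem_of_forall_nsmul_abs_le (hM : IsMaximalLIdeal M) {g h : G}
    (hgh : ∀ n : ℕ, n • |g| ≤ h) : g ∈ M := by
  by_contra hg
  obtain ⟨k, hk, n, hn⟩ := hM.exists_abs_le_add_nsmul hg h
  have h_le : |g| + n • |g| ≤ k + n • |g| :=
    calc |g| + n • |g| = (n + 1) • |g| := (succ_nsmul' |g| n).symm
      _ ≤ |h| := (hgh (n + 1)).trans (le_abs_self h)
      _ ≤ k + n • |g| := hn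
  exact hg (hM.1.mem_of_abs_le hk (le_of_add_le_add_right h_le))

end IsMaximalLIdeal

namespace IsStrongUnit

variable {u : G}

theorem mem_iff_eq_top (hu : IsStrongUnit u) {I : AddSubgroup G} (hI : IsLIdeal I) :
    u ∈ I ↔ I = ⊤ := by
  refine ⟨fun h_mem ↦ (AddSubgroup.eq_top_iff' I).2 fun x ↦ ?_, fun h ↦ h ▸ AddSubgroup.mem_top u⟩
  obtain ⟨n, hn⟩ := hu.2 |x|
  exact hI.mem_of_abs_le (I.nsmul_mem h_mem n) hn

theorem exists_isMaximalLIdeal_ge (hu : IsStrongUnit u) {I : AddSubgroup G} (hI : IsLIdeal I)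
    (hI_ne : I ≠ ⊤) : ∃ M, IsMaximalLIdeal M ∧ I ≤ M := by
  have h_chain : ∀ c ⊆ {J : AddSubgroup G | IsLIdeal J ∧ u ∉ J}, IsChain (· ≤ ·) c →
      ∀ J ∈ c, ∃ ub ∈ {J : AddSubgroup G | IsLIdeal J ∧ u ∉ J}, ∀ K ∈ c, K ≤ ub := by
    intro c hc hchain J hJ
    have hdir : DirectedOn (· ≤ ·) c := hchain.directedOn
    have hu_notMem : u ∉ sSup c := by
      rw [AddSubgroup.mem_sSup_of_directedOn ⟨J, hJ⟩ hdir]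
      exact fun ⟨K, hK, huK⟩ ↦ (hc hK).2 huK
    exact ⟨sSup c, ⟨.sSup_of_directedOn ⟨J, hJ⟩ hdir fun K hK ↦ (hc hK).1, hu_notMem⟩,
      fun _ ↦ le_sSup⟩
  obtain ⟨M, hIM, hM⟩ :=
    zorn_le_nonempty₀ _ h_chain I ⟨hI, mt (hu.mem_iff_eq_top hI).1 hI_ne⟩
  refine ⟨M, ⟨hM.prop.1, mt (hu.mem_iff_eq_top hM.prop.1).2 hM.prop.2, fun J hJ hJ_ne hMJ ↦ ?_⟩,
    hIM⟩
  exact (hM.eq_of_le ⟨hJ, mt (hu.mem_iff_eq_top hJ).1 hJ_ne⟩ hMJ).symm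

theorem exists_isMaximalLIdeal_negPart_mem (hu : IsStrongUnit u) {d : G} (hd : ¬ d ≤ 0) :
    ∃ M, IsMaximalLIdeal M ∧ d⁻ ∈ M := by
  have h_ne : lIdealGen {d⁻} ≠ ⊤ := fun h_top ↦ by
    have h_mem : d⁺ ∈ lIdealGen {d⁻} := h_top ▸ AddSubgroup.mem_top d⁺
    exact hd (posPart_eq_zero.1
      (eq_zero_of_mem_lIdealGen_of_inf_eq_zero (posPart_inf_negPart_eq_zero d) h_mem))
  obtain ⟨M, hM, h_le⟩ := hu.exists_isMaximalLIdeal_ge isLIdeal_lIdealGen h_ne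
  exact ⟨M, hM, h_le (subset_lIdealGen (Set.mem_singleton _))⟩

theorem exists_isMaximalLIdeal_notMem (hu : IsStrongUnit u) {g : G} {m : ℕ}
    (hg : ¬ m • g ≤ u) : ∃ M, IsMaximalLIdeal M ∧ g ∉ M := by
  obtain ⟨M, hM, h_neg⟩ := hu.exists_isMaximalLIdeal_negPart_mem (mt sub_nonpos.1 hg)
  refine ⟨M, hM, fun hgM ↦ hM.2.1 ((hu.mem_iff_eq_top hM.1).1 ?_)⟩
  have hu_le : |u| ≤ m • g + (m • g - u)⁻ :=
    calc |u| = m • g + -(m • g - u) := by rw [abs_of_nonneg hu.1, neg_sub, add_sub_cancel]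
      _ ≤ m • g + (m • g - u)⁻ := add_le_add_right (neg_le_negPart _) _
  exact hM.1.mem_of_abs_le (M.add_mem (M.nsmul_mem hgM m) h_neg) hu_le

end IsStrongUnit

end LIdeal

/-- For a unital ℓ-group, semisimplicity (trivial radical) is equivalent to the
Archimedean property. -/
theorem semisimple_iff_archimedean {G : Type*} [Lattice G] [AddCommGroup G]
    [CovariantClass G G (· + ·) (· ≤ ·)] (u : G) (hu : IsStrongUnit u) :
    (∀ g : G, (∀ m : AddSubgroup G, IsMaximalLIdeal m → g ∈ m) → g = 0) ↔
      (∀ g h : G, 0 < g → g ≤ h → ∃ m : ℕ, ¬ (m • g ≤ h)) := by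
  constructor
  · intro h_rad g h hg _
    by_contra! h_bdd
    refine hg.ne' (h_rad g fun M hM ↦ hM.mem_of_forall_nsmul_abs_le (h := h) ?_)
    rwa [abs_of_nonneg hg.le]
  · intro h_arch g hg_rad
    have h_not_pos : ¬ 0 < |g| := fun h_pos ↦ by
      obtain ⟨m, hm⟩ := h_arch |g| (|g| + u) h_pos (le_add_of_nonneg_right hu.1)
      obtain ⟨M, hM, hgM⟩ := hu.exists_isMaximalLIdeal_notMem
        fun h ↦ hm (h.trans (le_add_of_nonneg_left (abs_nonneg g)))
      exact hgM (hM.1.abs_mem_iff.2 (hg_rad M hM))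
    have h_abs : |g| ≤ 0 := ((abs_nonneg g).eq_of_not_lt h_not_pos).ge
    exact le_antisymm ((le_abs_self g).trans h_abs) (neg_nonpos.1 ((neg_le_abs g).trans h_abs))
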